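/- arXiv:2308.07138 — 6 statements merged into one kernel-verified Lean document; each statement's English description precedes it below -/
import Mathlib

section
/- Let N ≥ 2 be an integer and define the linear map T_{0,0} : ℝ^{N−1} → ℝ^N by (T_{0,0}v)_1 = (T_{0,0}v)_N = 0 and (T_{0,0}v)_i = v_i − v_{i−1} for 2 ≤ i ≤ N−1. Then the restriction of T_{0,0} to the subspace ℝ^{N−1}_{↕−} = {v ∈ ℝ^{N−1} : v_i = −v_{N−i} for all i} is a linear bijection onto the subspace ℝ^{N,0,0}_{↕+} = {w ∈ ℝ^N : w_1 = w_N = 0 and w_i = w_{N+1−i} for all i}. -/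
noncomputable section

set_option linter.unnecessarySeqFocus false

/-- Forward difference map `ℝ^{d+1} → ℝ^d`, `(T v)_i = v_{i+1} - v_i` for `1 ≤ i ≤ d`
(vectors are encoded as functions `ℕ → ℝ` indexed by `1,…,d`, vanishing elsewhere). -/
def Dmap (d : ℕ) : (ℕ → ℝ) →ₗ[ℝ] (ℕ → ℝ) where
  toFun v := fun i => if 1 ≤ i ∧ i ≤ d then v (i + 1) - v i else 0
  map_add' v w := by
    funext i
    by_cases h : 1 ≤ i ∧ i ≤ d <;> simp [h] <;> ring
  map_smul' c v := by
    funext i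
    by_cases h : 1 ≤ i ∧ i ≤ d <;> simp [h] <;> ring

/-- The map `T₀₀ : ℝ^{N-1} → ℝ^N`, `(T₀₀ v)_1 = (T₀₀ v)_N = 0` and
`(T₀₀ v)_i = v_i - v_{i-1}` for `2 ≤ i ≤ N - 1`. -/
def T00map (N : ℕ) : (ℕ → ℝ) →ₗ[ℝ] (ℕ → ℝ) where
  toFun v := fun i => if 2 ≤ i ∧ i ≤ N - 1 then v i - v (i - 1) else 0
  map_add' v w := by
    funext i
    by_cases h : 2 ≤ i ∧ i ≤ N - 1 <;> simp [h] <;> ring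
  map_smul' c v := by
    funext i
    by_cases h : 2 ≤ i ∧ i ≤ N - 1 <;> simp [h] <;> ring

/-- The map `S : ℝ^{N,0,0} → ℝ^{N-1}`, `(S v)_i = v_i + v_{i+1}` for `1 ≤ i ≤ N - 1`. -/
def Smap (N : ℕ) : (ℕ → ℝ) →ₗ[ℝ] (ℕ → ℝ) where
  toFun v := fun i => if 1 ≤ i ∧ i ≤ N - 1 then v i + v (i + 1) else 0
  map_add' v w := by
    funext i
    by_cases h : 1 ≤ i ∧ i ≤ N - 1 <;> simp [h] <;> ring
  map_smul' c v := by
    funext i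
    by_cases h : 1 ≤ i ∧ i ≤ N - 1 <;> simp [h] <;> ring

/-- The map `F : ℝ^{N-2} → ℝ^{N-1}`, `(F v)_i = -x_{i-1} v_{i-1} + x_{i+1} v_i` for
`1 ≤ i ≤ N - 1` (with the conventions `v_0 = v_{N-1} = 0` holding automatically for
vectors encoded with support in `1,…,N-2`). -/
def Fmap (N : ℕ) (x : ℕ → ℝ) : (ℕ → ℝ) →ₗ[ℝ] (ℕ → ℝ) where
  toFun v := fun i => if 1 ≤ i ∧ i ≤ N - 1 then -x (i - 1) * v (i - 1) + x (i + 1) * v i else 0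
  map_add' v w := by
    funext i
    by_cases h : 1 ≤ i ∧ i ≤ N - 1 <;> simp [h] <;> ring
  map_smul' c v := by
    funext i
    by_cases h : 1 ≤ i ∧ i ≤ N - 1 <;> simp [h] <;> ring

/-- The subspace `ℝ^d_{↕ε}` of vectors (encoded as functions `ℕ → ℝ` indexed by `1,…,d`,
vanishing at all other indices) satisfying `v_i = ε · v_{d+1-i}` for `1 ≤ i ≤ d`. -/
def symSub (d : ℕ) (ε : ℝ) : Submodule ℝ (ℕ → ℝ) where
  carrier := {v | (∀ i, i = 0 ∨ d < i → v i = 0) ∧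
    ∀ i, 1 ≤ i → i ≤ d → v i = ε * v (d + 1 - i)}
  zero_mem' := ⟨fun _ _ => rfl, fun _ _ _ => by simp⟩
  add_mem' := by
    rintro v w ⟨hv0, hv⟩ ⟨hw0, hw⟩
    refine ⟨fun i hi => ?_, fun i h1 h2 => ?_⟩
    · simp [hv0 i hi, hw0 i hi]
    · simp only [Pi.add_apply]
      rw [hv i h1 h2, hw i h1 h2]; ring
  smul_mem' := by
    rintro c v ⟨hv0, hv⟩
    refine ⟨fun i hi => ?_, fun i h1 h2 => ?_⟩
    · simp [hv0 i hi]
    · simp only [Pi.smul_apply, smul_eq_mul]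
      rw [hv i h1 h2]; ring

/-- The subspace `ℝ^{N,0,0}_{↕+}` of vectors (encoded as functions `ℕ → ℝ` indexed by
`1,…,N`, vanishing at all other indices) with `w_1 = w_N = 0` and `w_i = w_{N+1-i}`. -/
def sub00 (N : ℕ) : Submodule ℝ (ℕ → ℝ) where
  carrier := {w | (∀ i, i = 0 ∨ N < i → w i = 0) ∧ w 1 = 0 ∧ w N = 0 ∧
    ∀ i, 1 ≤ i → i ≤ N → w i = w (N + 1 - i)}
  zero_mem' := ⟨fun _ _ => rfl, rfl, rfl, fun _ _ _ => rfl⟩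
  add_mem' := by
    rintro v w ⟨hv0, hv1, hvN, hv⟩ ⟨hw0, hw1, hwN, hw⟩
    refine ⟨fun i hi => ?_, ?_, ?_, fun i h1 h2 => ?_⟩
    · simp [hv0 i hi, hw0 i hi]
    · simp [hv1, hw1]
    · simp [hvN, hwN]
    · simp only [Pi.add_apply]
      rw [hv i h1 h2, hw i h1 h2]
  smul_mem' := by
    rintro c v ⟨hv0, hv1, hvN, hv⟩
    refine ⟨fun i hi => ?_, ?_, ?_, fun i h1 h2 => ?_⟩
    · simp [hv0 i hi]
    · simp [hv1]
    · simp [hvN]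
    · simp only [Pi.smul_apply, smul_eq_mul]
      rw [hv i h1 h2]

end

/-- The restriction of the map `T₀₀ : ℝ^{N-1} → ℝ^N` to the subspace `ℝ^{N-1}_{↕-}` is a
(linear) bijection onto the subspace `ℝ^{N,0,0}_{↕+}`. -/
theorem T00map_bijOn_antisym_sub00 (N : ℕ) (hN : 2 ≤ N) :
    Set.BijOn (T00map N) (symSub (N - 1) (-1) : Set (ℕ → ℝ)) (sub00 N : Set (ℕ → ℝ)) := by
  refine ⟨?_, ?_, ?_⟩
  · rintro v ⟨hv0, hv⟩
    refine ⟨fun i hi => ?_, ?_, ?_, fun i h1 h2 => ?_⟩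
    · show (if 2 ≤ i ∧ i ≤ N - 1 then v i - v (i - 1) else 0) = 0
      rw [if_neg (by omega)]
    · show (if 2 ≤ 1 ∧ 1 ≤ N - 1 then v 1 - v (1 - 1) else 0) = 0
      rw [if_neg (by omega)]
    · show (if 2 ≤ N ∧ N ≤ N - 1 then v N - v (N - 1) else 0) = 0
      rw [if_neg (by omega)]
    · show (if 2 ≤ i ∧ i ≤ N - 1 then v i - v (i - 1) else 0) =
        (if 2 ≤ N + 1 - i ∧ N + 1 - i ≤ N - 1 then v (N + 1 - i) - v (N + 1 - i - 1) else 0)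
      by_cases h : 2 ≤ i ∧ i ≤ N - 1
      · rw [if_pos h, if_pos (by omega)]
        have e1 := hv i (by omega) (by omega)
        have e2 := hv (i - 1) (by omega) (by omega)
        rw [show N - 1 + 1 - i = N + 1 - i - 1 by omega] at e1
        rw [show N - 1 + 1 - (i - 1) = N + 1 - i by omega] at e2
        linarith
      · rw [if_neg h, if_neg (by omega)]
  · rintro u ⟨hu0, hu⟩ v ⟨hv0, hv⟩ huv
    have hstep : ∀ i, 2 ≤ i → i ≤ N - 1 → u i - u (i - 1) = v i - v (i - 1) := by
      intro i h1 h2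
      have h : (if 2 ≤ i ∧ i ≤ N - 1 then u i - u (i - 1) else 0) =
        (if 2 ≤ i ∧ i ≤ N - 1 then v i - v (i - 1) else 0) := congrFun huv i
      rwa [if_pos ⟨h1, h2⟩, if_pos ⟨h1, h2⟩] at h
    have hc : ∀ i, i + 1 ≤ N - 1 → u (i + 1) - v (i + 1) = u 1 - v 1 := by
      intro i
      induction i with
      | zero => intro _; rfl
      | succ k ih =>
        intro h
        have e1 := ih (by omega)
        have e2 := hstep (k + 1 + 1) (by omega) h
        simp only [Nat.add_sub_cancel] at e2
        linarith
    have a1 := hu 1 le_rfl (by omega)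
    have a2 := hv 1 le_rfl (by omega)
    have a3 := hc (N - 2) (by omega)
    rw [show N - 1 + 1 - 1 = N - 2 + 1 by omega] at a1 a2
    funext i
    by_cases h : i = 0 ∨ N - 1 < i
    · rw [hu0 i h, hv0 i h]
    · have a4 := hc (i - 1) (by omega)
      rw [show i - 1 + 1 = i by omega] at a4
      linarith
  · rintro w ⟨hw0, hw1, hwN, hw⟩
    obtain ⟨P, hP⟩ : ∃ P : ℕ → ℝ, P = fun i => ∑ k ∈ Finset.range (i + 1), w k := ⟨_, rfl⟩
    have hPs : ∀ i, P (i + 1) = P i + w (i + 1) := by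
      intro i
      rw [hP]
      exact Finset.sum_range_succ _ _
    have hP1 : P 1 = 0 := by
      rw [hP]
      simp [Finset.sum_range_succ, hw1, hw0 0 (Or.inl rfl)]
    have hsym : ∀ i, i + 1 ≤ N - 1 → P (i + 1) + P (N - (i + 1)) = P (N - 1) := by
      intro i
      induction i with
      | zero => intro _; simp [hP1]
      | succ k ih =>
        intro h
        have e1 := ih (by omega)
        have e2 := hPs (k + 1)
        have e3 := hPs (N - (k + 1 + 1))
        rw [show N - (k + 1 + 1) + 1 = N - (k + 1) by omega] at e3
        have e4 := hw (k + 1 + 1) (by omega) (by omega)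
        rw [show N + 1 - (k + 1 + 1) = N - (k + 1) by omega] at e4
        linarith
    refine ⟨fun i => if 1 ≤ i ∧ i ≤ N - 1 then P i - P (N - 1) / 2 else 0, ⟨?_, ?_⟩, ?_⟩
    · intro i hi
      exact if_neg (by omega)
    · intro i h1 h2
      show (if 1 ≤ i ∧ i ≤ N - 1 then P i - P (N - 1) / 2 else 0) = -1 *
        (if 1 ≤ N - 1 + 1 - i ∧ N - 1 + 1 - i ≤ N - 1 then
          P (N - 1 + 1 - i) - P (N - 1) / 2 else 0)
      rw [if_pos ⟨h1, h2⟩, if_pos (by omega)]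
      have e := hsym (i - 1) (by omega)
      rw [show i - 1 + 1 = i by omega] at e
      rw [show N - 1 + 1 - i = N - i by omega]
      linarith
    · funext i
      show (if 2 ≤ i ∧ i ≤ N - 1 then
        (if 1 ≤ i ∧ i ≤ N - 1 then P i - P (N - 1) / 2 else 0) -
        (if 1 ≤ i - 1 ∧ i - 1 ≤ N - 1 then P (i - 1) - P (N - 1) / 2 else 0) else 0) = w i
      by_cases h : 2 ≤ i ∧ i ≤ N - 1
      · rw [if_pos h, if_pos (by omega), if_pos (by omega)]
        have e := hPs (i - 1)
        rw [show i - 1 + 1 = i by omega] at e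
        linarith
      · rw [if_neg h]
        by_cases h' : i = 0 ∨ N < i
        · rw [hw0 i h']
        · rcases (show i = 1 ∨ i = N by omega) with h'' | h''
          · rw [h'', hw1]
          · rw [h'', hwN]
end

section
/- Let N ≥ 3 be an integer and let x ∈ ℝ^{N−1} have all entries strictly positive; set x_0 = x_N = 0. Define F : ℝ^{N−2} → ℝ^{N−1} by (Fv)_i = −x_{i−1}·v_{i−1} + x_{i+1}·v_i for 1 ≤ i ≤ N−1, with the conventions v_0 = v_{N−1} = 0. Then the kernel of the transpose map F^⊤ : ℝ^{N−1} → ℝ^{N−2} (equivalently, the orthogonal complement in ℝ^{N−1} of the image of F with respect to the standard inner product) is exactly the one-dimensional line ℝ·x spanned by x. -/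
/-- Let `N ≥ 3` and let `x ∈ ℝ^{N-1}` (encoded as a function `ℕ → ℝ` indexed by `1,…,N-1`,
vanishing at all other indices, so that in particular `x_0 = x_N = 0`) have all entries
strictly positive. The kernel of the transpose `F^⊤ : ℝ^{N-1} → ℝ^{N-2}` of the map `F`,
given explicitly by `(F^⊤ w)_j = x_{j+1} w_j - x_j w_{j+1}` for `1 ≤ j ≤ N-2`, is exactly
the line `ℝ · x` spanned by `x`. -/
theorem ker_F_transpose_eq_span (N : ℕ) (hN : 3 ≤ N) (x : ℕ → ℝ)
    (hxvan : ∀ i, i = 0 ∨ N - 1 < i → x i = 0)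
    (hxpos : ∀ i, 1 ≤ i → i ≤ N - 1 → 0 < x i) :
    ∀ w : ℕ → ℝ, (∀ i, i = 0 ∨ N - 1 < i → w i = 0) →
      ((∀ j, 1 ≤ j → j ≤ N - 2 → x (j + 1) * w j - x j * w (j + 1) = 0) ↔
        ∃ c : ℝ, w = c • x) := by
  intro w hw
  constructor
  · intro h
    have h1 : 0 < x 1 := hxpos 1 le_rfl (by omega)
    refine ⟨w 1 / x 1, ?_⟩
    have key : ∀ k, k + 1 ≤ N - 1 → w (k + 1) = w 1 / x 1 * x (k + 1) := by
      intro k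
      induction k with
      | zero =>
        intro _
        simp only [zero_add]
        field_simp
      | succ k ih =>
        intro hk
        have e := h (k + 1) (by omega) (by omega)
        have p := hxpos (k + 1) (by omega) (by omega)
        rw [ih (by omega)] at e
        apply mul_left_cancel₀ p.ne'
        linarith
    funext i
    simp only [Pi.smul_apply, smul_eq_mul]
    by_cases hi : i = 0 ∨ N - 1 < i
    · rw [hw i hi, hxvan i hi, mul_zero]
    · obtain ⟨k, rfl⟩ : ∃ k, i = k + 1 := ⟨i - 1, by omega⟩
      exact key k (by omega)
  · rintro ⟨c, rfl⟩ j _ _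
    simp only [Pi.smul_apply, smul_eq_mul]
    ring
end

section
/- Let N ≥ 2 be an integer, n = ⌊N/2⌋, and let x ∈ ℝ^{N−1} have all entries strictly positive and satisfy x_i = x_{N−i} for all i; set x_0 = x_N = 0. With S : ℝ^{N,0,0} → ℝ^{N−1}, (Sv)_i = v_i + v_{i+1}; T : ℝ^{N−1} → ℝ^{N−2}, (Tv)_i = v_{i+1} − v_i; T_{0,0} : ℝ^{N−1} → ℝ^N, (T_{0,0}v)_1 = (T_{0,0}v)_N = 0 and (T_{0,0}v)_i = v_i − v_{i−1} for 2 ≤ i ≤ N−1; and F : ℝ^{N−2} → ℝ^{N−1}, (Fv)_i = −x_{i−1}v_{i−1} + x_{i+1}v_i (conventions v_0 = v_{N−1} = 0), the linear map from ℝ^{N−1}_{↕+} ⊕ ℝ^{N−1}_{↕−} to ℝ^{N−1}_{↕+} ⊕ ℝ^{N,0,0}_{↕+} defined by (ζ, ξ) ↦ (π·F(Tζ) − 4π·ζ_n·x + S(T_{0,0}ξ), (1/2)·T_{0,0}ξ) is a well-defined linear isomorphism. -/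
theorem aux_memSym (d : ℕ) (ε : ℝ) (v : ℕ → ℝ) : v ∈ symSub d ε ↔
    ((∀ i, i = 0 ∨ d < i → v i = 0) ∧ ∀ i, 1 ≤ i → i ≤ d → v i = ε * v (d + 1 - i)) := Iff.rfl

theorem aux_mem00 (N : ℕ) (w : ℕ → ℝ) : w ∈ sub00 N ↔
    ((∀ i, i = 0 ∨ N < i → w i = 0) ∧ w 1 = 0 ∧ w N = 0 ∧
    ∀ i, 1 ≤ i → i ≤ N → w i = w (N + 1 - i)) := Iff.rfl

theorem aux_D (d : ℕ) (v : ℕ → ℝ) (i : ℕ) :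
    Dmap d v i = if 1 ≤ i ∧ i ≤ d then v (i + 1) - v i else 0 := rfl

theorem aux_T (d : ℕ) (v : ℕ → ℝ) (i : ℕ) :
    T00map d v i = if 2 ≤ i ∧ i ≤ d - 1 then v i - v (i - 1) else 0 := rfl

theorem aux_S (N : ℕ) (v : ℕ → ℝ) (i : ℕ) :
    Smap N v i = if 1 ≤ i ∧ i ≤ N - 1 then v i + v (i + 1) else 0 := rfl

theorem aux_F (N : ℕ) (x v : ℕ → ℝ) (i : ℕ) :
    Fmap N x v i = if 1 ≤ i ∧ i ≤ N - 1 then -x (i - 1) * v (i - 1) + x (i + 1) * v i else 0 := rfl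

theorem aux_fd (d : ℕ) (ε : ℝ) : FiniteDimensional ℝ (symSub d ε) := by
  let f : symSub d ε →ₗ[ℝ] (Fin (d + 1) → ℝ) :=
    (LinearMap.funLeft ℝ ℝ (fun i : Fin (d + 1) => (i : ℕ))).comp (symSub d ε).subtype
  refine FiniteDimensional.of_injective f ?_
  intro a b hab
  ext i
  by_cases h : i < d + 1
  · exact congrFun hab ⟨i, h⟩
  · rw [a.2.1 i (by omega), b.2.1 i (by omega)]

/-- T00 maps antisymmetric vectors to `sub00`. -/
theorem aux_T_maps (N : ℕ) (hN : 2 ≤ N) (ξ : ℕ → ℝ) (h : ξ ∈ symSub (N - 1) (-1)) :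
    T00map N ξ ∈ sub00 N := by
  obtain ⟨h0, h1⟩ := h
  refine ⟨fun i hi => ?_, ?_, ?_, fun i hi hi' => ?_⟩
  · rw [aux_T, if_neg (by omega)]
  · rw [aux_T, if_neg (by omega)]
  · rw [aux_T, if_neg (by omega)]
  · rw [aux_T, aux_T]
    by_cases hc : 2 ≤ i ∧ i ≤ N - 1
    · rw [if_pos hc, if_pos (by omega), h1 i (by omega) (by omega),
        h1 (i - 1) (by omega) (by omega),
        show N - 1 + 1 - i = N + 1 - i - 1 by omega, show N - 1 + 1 - (i - 1) = N + 1 - i by omega]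
      ring
    · rw [if_neg hc, if_neg (by omega)]

theorem aux_T_inj (N : ℕ) (hN : 2 ≤ N) (ξ : ℕ → ℝ) (h : ξ ∈ symSub (N - 1) (-1))
    (hT : T00map N ξ = 0) : ξ = 0 := by
  obtain ⟨h0, h1⟩ := h
  have hc : ∀ i, i + 1 ≤ N - 1 → ξ (i + 1) = ξ 1 := by
    intro i
    induction i with
    | zero => intro _; rfl
    | succ k ih =>
      intro hk
      have := congrFun hT (k + 1 + 1)
      rw [aux_T, if_pos (by omega)] at this
      simp only [Nat.add_sub_cancel, Pi.zero_apply] at this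
      rw [← ih (by omega)]; linarith
  have h11 := h1 1 le_rfl (by omega)
  have hl := hc (N - 2) (by omega)
  rw [show N - 1 + 1 - 1 = N - 2 + 1 by omega, hl] at h11
  have hz : ξ 1 = 0 := by linarith
  funext i
  by_cases hi : 1 ≤ i ∧ i ≤ N - 1
  · have := hc (i - 1) (by omega)
    rw [show i - 1 + 1 = i by omega] at this
    rw [this, hz]; rfl
  · exact h0 i (by omega)

theorem aux_T_surj (N : ℕ) (hN : 2 ≤ N) (w : ℕ → ℝ) (h : w ∈ sub00 N) :
    ∃ ξ ∈ symSub (N - 1) (-1), T00map N ξ = w := by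
  obtain ⟨h0, hw1, hwN, hs⟩ := h
  let G : ℕ → ℝ := fun i => ∑ j ∈ Finset.range (i + 1), w j
  have hG : ∀ i, G (i + 1) = G i + w (i + 1) := fun i => Finset.sum_range_succ _ _
  have hG0 : G 0 = 0 := by simp [G, h0 0 (Or.inl rfl)]
  have hG1 : G 1 = 0 := by rw [hG 0, hG0, zero_add, hw1]
  have hsym : ∀ i, i + 1 ≤ N - 1 → G (i + 1) + G (N - (i + 1)) = G (N - 1) := by
    intro i
    induction i with
    | zero => intro _; simp [hG1]
    | succ k ih =>
      intro hk
      have e := ih (by omega)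
      have e1 := hG (k + 1)
      have e2 := hG (N - (k + 1 + 1))
      rw [show N - (k + 1 + 1) + 1 = N - (k + 1) by omega] at e2
      have e3 := hs (k + 1 + 1) (by omega) (by omega)
      rw [show N + 1 - (k + 1 + 1) = N - (k + 1) by omega] at e3
      linarith
  refine ⟨fun i => if 1 ≤ i ∧ i ≤ N - 1 then G i - G (N - 1) / 2 else 0, ⟨?_, ?_⟩, ?_⟩
  · intro i hi
    exact if_neg (by omega)
  · intro i hi hi'
    have := hsym (i - 1) (by omega)
    rw [show i - 1 + 1 = i by omega] at this
    simp only []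
    rw [if_pos (by omega), if_pos (by omega), show N - 1 + 1 - i = N - i by omega]
    linarith
  · funext i
    rw [aux_T]
    by_cases hi : 2 ≤ i ∧ i ≤ N - 1
    · rw [if_pos hi, if_pos (by omega), if_pos (by omega)]
      have := hG (i - 1)
      rw [show i - 1 + 1 = i by omega] at this
      linarith
    · rw [if_neg hi]
      by_cases h1 : i = 1
      · rw [h1, hw1]
      · by_cases h2 : i = N
        · rw [h2, hwN]
        · exact (h0 i (by omega)).symm

theorem aux_S_maps (N : ℕ) (w : ℕ → ℝ) (h : w ∈ sub00 N) :
    Smap N w ∈ symSub (N - 1) 1 := by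
  obtain ⟨h0, hw1, hwN, hs⟩ := h
  refine ⟨fun i hi => ?_, fun i hi hi' => ?_⟩
  · rw [aux_S, if_neg (by omega)]
  · rw [aux_S, aux_S, if_pos (by omega), if_pos (by omega), hs i (by omega) (by omega),
      hs (i + 1) (by omega) (by omega), show N - 1 + 1 - i + 1 = N + 1 - i by omega,
      show N - 1 + 1 - i = N + 1 - (i + 1) by omega]
    ring

theorem aux_F_maps (N : ℕ) (hN : 2 ≤ N) (x : ℕ → ℝ)
    (hxvan : ∀ i, i = 0 ∨ N - 1 < i → x i = 0)
    (hxsym : ∀ i, 1 ≤ i → i ≤ N - 1 → x i = x (N - i)) (ζ : ℕ → ℝ)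
    (h : ζ ∈ symSub (N - 1) 1) : Fmap N x (Dmap (N - 2) ζ) ∈ symSub (N - 1) 1 := by
  obtain ⟨h0, h1⟩ := h
  have hx : ∀ i j, i + j = N → x i = x j := by
    intro i j hij
    by_cases hi : 1 ≤ i ∧ i ≤ N - 1
    · rw [hxsym i hi.1 hi.2, show N - i = j by omega]
    · rw [hxvan i (by omega), hxvan j (by omega)]
  have hv : ∀ i j, i + j = N - 1 → Dmap (N - 2) ζ i = - Dmap (N - 2) ζ j := by
    intro i j hij
    rw [aux_D, aux_D]
    by_cases hi : 1 ≤ i ∧ i ≤ N - 2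
    · rw [if_pos hi, if_pos (by omega), h1 i (by omega) (by omega),
        h1 (i + 1) (by omega) (by omega), show N - 1 + 1 - i = j + 1 by omega,
        show N - 1 + 1 - (i + 1) = j by omega]
      ring
    · rw [if_neg hi, if_neg (by omega)]; simp
  refine ⟨fun i hi => ?_, fun i hi hi' => ?_⟩
  · rw [aux_F, if_neg (by omega)]
  · rw [aux_F, aux_F, if_pos (by omega), if_pos (by omega),
      hx (i - 1) (N - 1 + 1 - i + 1) (by omega), hx (i + 1) (N - 1 + 1 - i - 1) (by omega),
      hv (i - 1) (N - 1 + 1 - i) (by omega), hv i (N - 1 + 1 - i - 1) (by omega)]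
    ring

theorem aux_A_inj (N : ℕ) (hN : 2 ≤ N) (x : ℕ → ℝ)
    (hxvan : ∀ i, i = 0 ∨ N - 1 < i → x i = 0)
    (hxpos : ∀ i, 1 ≤ i → i ≤ N - 1 → 0 < x i) (ζ : ℕ → ℝ)
    (h : ζ ∈ symSub (N - 1) 1)
    (hA : Fmap N x (Dmap (N - 2) ζ) = (4 * ζ (N / 2)) • x) : ζ = 0 := by
  obtain ⟨h0, h1⟩ := h
  set v := Dmap (N - 2) ζ with hvdef
  have hF : ∀ i, i + 1 ≤ N - 1 →
      -x i * v i + x (i + 1 + 1) * v (i + 1) = 4 * ζ (N / 2) * x (i + 1) := by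
    intro i hi
    have := congrFun hA (i + 1)
    rw [aux_F, if_pos (by omega)] at this
    simpa using this
  have hz : ζ (N / 2) = 0 := by
    let g : ℕ → ℝ := fun i => x (i + 1) * x i * v i
    have hs : ∑ i ∈ Finset.range (N - 1), (g (i + 1) - g i) = 0 := by
      rw [Finset.sum_range_sub]
      simp only [g]
      rw [hxvan 0 (by omega), hxvan (N - 1 + 1) (by omega)]; ring
    have hs2 : ∑ i ∈ Finset.range (N - 1), (g (i + 1) - g i)
        = 4 * ζ (N / 2) * ∑ i ∈ Finset.range (N - 1), x (i + 1) ^ 2 := by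
      rw [Finset.mul_sum]
      refine Finset.sum_congr rfl fun i hi => ?_
      rw [Finset.mem_range] at hi
      have := hF i (by omega)
      simp only [g]
      linear_combination x (i + 1) * this
    have hp : 0 < ∑ i ∈ Finset.range (N - 1), x (i + 1) ^ 2 := by
      refine Finset.sum_pos (fun i hi => ?_) ⟨0, by rw [Finset.mem_range]; omega⟩
      rw [Finset.mem_range] at hi
      exact pow_pos (hxpos _ (by omega) (by omega)) 2
    rw [hs] at hs2
    have := (mul_eq_zero.mp hs2.symm).resolve_right hp.ne'
    linarith
  have hv : ∀ i, i ≤ N - 2 → v i = 0 := by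
    intro i
    induction i with
    | zero => intro _; rw [hvdef, aux_D, if_neg (by omega)]
    | succ k ih =>
      intro hk
      have := hF k (by omega)
      rw [ih (by omega), hz] at this
      have hp := hxpos (k + 1 + 1) (by omega) (by omega)
      have h2 : x (k + 1 + 1) * v (k + 1) = 0 := by linarith
      exact (mul_eq_zero.mp h2).resolve_left hp.ne'
  have hc : ∀ i, i + 1 ≤ N - 1 → ζ (i + 1) = ζ 1 := by
    intro i
    induction i with
    | zero => intro _; rfl
    | succ k ih =>
      intro hk
      have := hv (k + 1) (by omega)
      rw [hvdef, aux_D, if_pos (by omega)] at this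
      rw [← ih (by omega)]; linarith
  have hz1 : ζ 1 = 0 := by
    have := hc (N / 2 - 1) (by omega)
    rw [show N / 2 - 1 + 1 = N / 2 by omega] at this
    rw [← this, hz]
  funext i
  by_cases hi : 1 ≤ i ∧ i ≤ N - 1
  · have := hc (i - 1) (by omega)
    rw [show i - 1 + 1 = i by omega] at this
    rw [this, hz1]; rfl
  · exact h0 i (by omega)

/-- **Control of forces and dislocations** (the algebraic core of Lemma A.3): with
`n = ⌊N/2⌋` and `x ∈ ℝ^{N-1}` entrywise positive and symmetric, the linear map
`(ζ, ξ) ↦ (π·F(Tζ) - 4π·ζ_n·x + S(T₀₀ ξ), (1/2)·T₀₀ ξ)` is a well-defined linear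
isomorphism from `ℝ^{N-1}_{↕+} ⊕ ℝ^{N-1}_{↕-}` onto `ℝ^{N-1}_{↕+} ⊕ ℝ^{N,0,0}_{↕+}`. -/
theorem forces_dislocations_iso (N : ℕ) (hN : 2 ≤ N) (x : ℕ → ℝ)
    (hxvan : ∀ i, i = 0 ∨ N - 1 < i → x i = 0)
    (hxpos : ∀ i, 1 ≤ i → i ≤ N - 1 → 0 < x i)
    (hxsym : ∀ i, 1 ≤ i → i ≤ N - 1 → x i = x (N - i))
    (P : (ℕ → ℝ) × (ℕ → ℝ) → (ℕ → ℝ) × (ℕ → ℝ))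
    (hP : ∀ ζ ξ : ℕ → ℝ, P (ζ, ξ) =
      (Real.pi • Fmap N x (Dmap (N - 2) ζ) - (4 * Real.pi * ζ (N / 2)) • x
          + Smap N (T00map N ξ),
        (1 / 2 : ℝ) • T00map N ξ)) :
    IsLinearMap ℝ P ∧
    Set.BijOn P
      ((symSub (N - 1) 1 : Set (ℕ → ℝ)) ×ˢ (symSub (N - 1) (-1) : Set (ℕ → ℝ)))
      ((symSub (N - 1) 1 : Set (ℕ → ℝ)) ×ˢ (sub00 N : Set (ℕ → ℝ))) := by
  have hxmem : x ∈ symSub (N - 1) 1 := by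
    refine ⟨hxvan, fun i hi hi' => ?_⟩
    rw [hxsym i hi hi', show N - 1 + 1 - i = N - i by omega, one_mul]
  let A : (ℕ → ℝ) →ₗ[ℝ] (ℕ → ℝ) :=
    Real.pi • (Fmap N x ∘ₗ Dmap (N - 2))
      - (4 * Real.pi) • (LinearMap.proj (R := ℝ) (φ := fun _ : ℕ => ℝ) (N / 2)).smulRight x
  have hA : ∀ ζ, A ζ = Real.pi • Fmap N x (Dmap (N - 2) ζ) - (4 * Real.pi * ζ (N / 2)) • x := by
    intro ζ
    simp [A, smul_smul]
  have hP' : ∀ ζ ξ, P (ζ, ξ) = (A ζ + Smap N (T00map N ξ), (1 / 2 : ℝ) • T00map N ξ) := by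
    intro ζ ξ
    rw [hP, hA]
  have hlin : IsLinearMap ℝ P := by
    constructor
    · rintro ⟨a, b⟩ ⟨c, d⟩
      rw [Prod.mk_add_mk, hP', hP', hP', Prod.mk_add_mk]
      simp only [map_add, smul_add]
      congr 1
      abel
    · rintro r ⟨a, b⟩
      rw [Prod.smul_mk, hP', hP', Prod.smul_mk]
      simp only [map_smul, smul_add]
      rw [smul_comm]
  have hAm : ∀ ζ ∈ symSub (N - 1) 1, A ζ ∈ symSub (N - 1) 1 := by
    intro ζ hζ
    rw [hA]
    exact Submodule.sub_mem _ (Submodule.smul_mem _ _ (aux_F_maps N hN x hxvan hxsym ζ hζ))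
      (Submodule.smul_mem _ _ hxmem)
  have hAi : ∀ ζ ∈ symSub (N - 1) 1, A ζ = 0 → ζ = 0 := by
    intro ζ hζ h
    apply aux_A_inj N hN x hxvan hxpos ζ hζ
    rw [hA, sub_eq_zero] at h
    have h2 : Real.pi • Fmap N x (Dmap (N - 2) ζ) = Real.pi • ((4 * ζ (N / 2)) • x) := by
      rw [h, smul_smul]; congr 1; ring
    exact smul_right_injective _ Real.pi_ne_zero h2
  have hAs : ∀ y ∈ symSub (N - 1) 1, ∃ ζ ∈ symSub (N - 1) 1, A ζ = y := by
    haveI := aux_fd (N - 1) 1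
    let B : symSub (N - 1) 1 →ₗ[ℝ] symSub (N - 1) 1 := A.restrict hAm
    have hB : Function.Injective B := by
      rw [injective_iff_map_eq_zero]
      intro a ha
      exact Subtype.ext (hAi a a.2 (congrArg Subtype.val ha))
    intro y hy
    obtain ⟨ζ, hζ⟩ := (LinearMap.injective_iff_surjective.mp hB) ⟨y, hy⟩
    exact ⟨ζ, ζ.2, congrArg Subtype.val hζ⟩
  refine ⟨hlin, ?_, ?_, ?_⟩
  · rintro ⟨ζ, ξ⟩ ⟨h1, h2⟩
    rw [hP']
    have hT := aux_T_maps N hN ξ h2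
    exact ⟨Submodule.add_mem _ (hAm ζ h1) (aux_S_maps N _ hT), Submodule.smul_mem _ _ hT⟩
  · rintro ⟨ζ, ξ⟩ ⟨h1, h2⟩ ⟨ζ', ξ'⟩ ⟨h1', h2'⟩ he
    rw [hP', hP', Prod.mk.injEq] at he
    obtain ⟨e1, e2⟩ := he
    have e3 : T00map N ξ = T00map N ξ' :=
      smul_right_injective _ (by norm_num : (1 / 2 : ℝ) ≠ 0) e2
    have e4 : ξ - ξ' = 0 := aux_T_inj N hN _ (Submodule.sub_mem _ h2 h2')
      (by rw [map_sub, e3, sub_self])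
    rw [e3] at e1
    have e5 : ζ - ζ' = 0 := hAi _ (Submodule.sub_mem _ h1 h1')
      (by rw [map_sub, add_right_cancel e1, sub_self])
    rw [sub_eq_zero.mp e4, sub_eq_zero.mp e5]
  · rintro ⟨y, w⟩ ⟨h1, h2⟩
    obtain ⟨ξ, hξ, hT⟩ := aux_T_surj N hN ((2 : ℝ) • w) (Submodule.smul_mem _ _ h2)
    have hS := aux_S_maps N _ (aux_T_maps N hN ξ hξ)
    obtain ⟨ζ, hζ, hAζ⟩ := hAs (y - Smap N (T00map N ξ)) (Submodule.sub_mem _ h1 hS)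
    refine ⟨(ζ, ξ), ⟨hζ, hξ⟩, ?_⟩
    rw [hP', hAζ, sub_add_cancel, hT, smul_smul]
    norm_num
end

section
/- Let R = (0,3) × (−π/2, π/2) in the (σ,θ)-plane, and for 0 < r < π/2 define Ω_r = R \ {(σ,θ) : σ² + (θ − π/2)² ≤ r²} and Ω_{r,r} = Ω_r \ {(σ,θ) : σ² + (θ + π/2)² ≤ r²}. There exists a constant C > 0, independent of r, such that for every 0 < r < π/2, for each Ω ∈ {Ω_r, Ω_{r,r}}, and for every continuously differentiable function u on the closure of Ω, one has ∫_{{σ=0} ∩ ∂Ω} u(0,θ)² dθ ≤ C · ∫_Ω ( |u| · |∇u| + u² ) dσ dθ, where the left-hand integral is over those θ ∈ (−π/2, π/2) with (0,θ) ∈ ∂Ω. -/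
open MeasureTheory

/-- The open rectangle `R = (0,3) × (-π/2, π/2)` in the `(σ,θ)`-plane. -/
def Rrect : Set (ℝ × ℝ) := Set.Ioo (0 : ℝ) 3 ×ˢ Set.Ioo (-(Real.pi / 2)) (Real.pi / 2)

/-- The once-perforated rectangle `Ω_r`. -/
def OmegaR (r : ℝ) : Set (ℝ × ℝ) :=
  Rrect \ {p | p.1 ^ 2 + (p.2 - Real.pi / 2) ^ 2 ≤ r ^ 2}

/-- The twice-perforated rectangle `Ω_{r,r}`. -/
def OmegaRR (r : ℝ) : Set (ℝ × ℝ) :=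
  OmegaR r \ {p | p.1 ^ 2 + (p.2 + Real.pi / 2) ^ 2 ≤ r ^ 2}

theorem aux_hasFDerivAt {Ω : Set (ℝ × ℝ)} (ho : IsOpen Ω) {u : ℝ × ℝ → ℝ}
    (hu : ContDiffOn ℝ 1 u (closure Ω)) {p : ℝ × ℝ} (hp : p ∈ Ω) :
    HasFDerivAt u (fderivWithin ℝ u (closure Ω) p) p := by
  have hn : closure Ω ∈ nhds p := Filter.mem_of_superset (ho.mem_nhds hp) subset_closure
  have h := (hu.differentiableOn (by norm_num)) p (subset_closure hp)
  exact h.hasFDerivWithinAt.hasFDerivAt hn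

theorem aux_bound {Ω : Set (ℝ × ℝ)} (ho : IsOpen Ω) (hb : Bornology.IsBounded Ω)
    {u : ℝ × ℝ → ℝ} (hu : ContDiffOn ℝ 1 u (closure Ω)) :
    ∃ M : ℝ, ∀ p ∈ Ω, ‖fderivWithin ℝ u (closure Ω) p‖ ≤ M := by
  have hc : IsCompact (closure Ω) := hb.isCompact_closure
  have key : ∃ M : ℝ, ∀ p ∈ closure Ω, p ∈ Ω → ‖fderivWithin ℝ u (closure Ω) p‖ ≤ M := by
    refine hc.induction_on (p := fun s => ∃ M : ℝ, ∀ p ∈ s, p ∈ Ω →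
      ‖fderivWithin ℝ u (closure Ω) p‖ ≤ M) ⟨0, by simp⟩ ?_ ?_ ?_
    · rintro s t hst ⟨M, hM⟩
      exact ⟨M, fun p hp => hM p (hst hp)⟩
    · rintro s t ⟨M, hM⟩ ⟨N, hN⟩
      refine ⟨max M N, fun p hp hpΩ => ?_⟩
      rcases hp with hp | hp
      · exact (hM p hp hpΩ).trans (le_max_left _ _)
      · exact (hN p hp hpΩ).trans (le_max_right _ _)
    · intro x hx
      have h1 : ContDiffWithinAt ℝ (0 + 1) u (closure Ω) x := by simpa using hu x hx
      obtain ⟨v, hv, -, f', hf', hcf⟩ :=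
        (contDiffWithinAt_succ_iff_hasFDerivWithinAt (by simp)).1 h1
      rw [Set.insert_eq_of_mem hx] at hv
      have hxv : x ∈ v := mem_of_mem_nhdsWithin hx hv
      have hcont : ContinuousWithinAt f' v x := hcf.continuousWithinAt
      have hev : ∀ᶠ y in nhdsWithin x v, ‖f' y‖ < ‖f' x‖ + 1 :=
        hcont.norm.eventually_lt_const (by linarith)
      have hev2 : ∀ᶠ y in nhdsWithin x (closure Ω), y ∈ v ∧ ‖f' y‖ < ‖f' x‖ + 1 := by
        have hle : nhdsWithin x (closure Ω) ≤ nhdsWithin x v :=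
          nhdsWithin_le_iff.2 hv
        exact (Filter.Eventually.and hv (hle hev))
      obtain ⟨o, hoo, hxo, hos⟩ := mem_nhdsWithin.1 hev2
      refine ⟨o ∩ closure Ω, mem_nhdsWithin.2 ⟨o, hoo, hxo, subset_rfl⟩, ‖f' x‖ + 1, ?_⟩
      rintro p ⟨hpo, hpc⟩ hpΩ
      obtain ⟨hpv, hlt⟩ := hos ⟨hpo, hpc⟩
      have hvn : v ∈ nhds p := by
        refine Filter.mem_of_superset ((hoo.inter ho).mem_nhds ⟨hpo, hpΩ⟩) ?_
        rintro q ⟨hq1, hq2⟩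
        exact (hos ⟨hq1, subset_closure hq2⟩).1
      have h2 : HasFDerivAt u (f' p) p := (hf' p hpv).hasFDerivAt hvn
      rw [(aux_hasFDerivAt ho hu hpΩ).unique h2]
      exact hlt.le
  obtain ⟨M, hM⟩ := key
  exact ⟨M, fun p hp => hM p (subset_closure hp) hp⟩

/-- the integrand on the right hand side -/
noncomputable def auxG (Ω : Set (ℝ × ℝ)) (u : ℝ × ℝ → ℝ) (p : ℝ × ℝ) : ℝ :=
  |u p| * Real.sqrt ((fderivWithin ℝ u (closure Ω) p (1, 0)) ^ 2 +
                  (fderivWithin ℝ u (closure Ω) p (0, 1)) ^ 2) + (u p) ^ 2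

theorem auxG_nonneg (Ω : Set (ℝ × ℝ)) (u : ℝ × ℝ → ℝ) (p : ℝ × ℝ) : 0 ≤ auxG Ω u p := by
  unfold auxG; positivity

theorem aux_integrable {Ω : Set (ℝ × ℝ)} (ho : IsOpen Ω) (hb : Bornology.IsBounded Ω)
    {u : ℝ × ℝ → ℝ} (hu : ContDiffOn ℝ 1 u (closure Ω)) :
    IntegrableOn (auxG Ω u) Ω := by
  have hcL : ContinuousOn (fderivWithin ℝ u (closure Ω)) Ω :=
    ((hu.mono subset_closure).continuousOn_fderiv_of_isOpen ho le_rfl).congr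
      (fun p hp => (aux_hasFDerivAt ho hu hp).fderiv.symm)
  have hcu : ContinuousOn u Ω := hu.continuousOn.mono subset_closure
  have hcG : ContinuousOn (auxG Ω u) Ω := by
    unfold auxG
    have h1 : ContinuousOn (fun p => fderivWithin ℝ u (closure Ω) p (1, 0)) Ω :=
      hcL.clm_apply continuousOn_const
    have h2 : ContinuousOn (fun p => fderivWithin ℝ u (closure Ω) p (0, 1)) Ω :=
      hcL.clm_apply continuousOn_const
    exact (hcu.abs.mul ((h1.pow 2).add (h2.pow 2)).sqrt).add (hcu.pow 2)
  obtain ⟨M, hM⟩ := aux_bound ho hb hu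
  obtain ⟨K, hK⟩ := hb.isCompact_closure.exists_bound_of_continuousOn hu.continuousOn
  refine ⟨hcG.aestronglyMeasurable ho.measurableSet, .restrict_of_bounded
    (C := K * Real.sqrt (M ^ 2 + M ^ 2) + K ^ 2) hb.measure_lt_top ?_⟩
  refine (ae_restrict_iff' ho.measurableSet).2 (Filter.Eventually.of_forall fun p hp => ?_)
  rw [Real.norm_of_nonneg (auxG_nonneg Ω u p)]
  have hup : |u p| ≤ K := hK p (subset_closure hp)
  have hK0 : 0 ≤ K := (abs_nonneg _).trans hup
  have e1 : |fderivWithin ℝ u (closure Ω) p (1, 0)| ≤ M := by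
    refine ((fderivWithin ℝ u (closure Ω) p).le_opNorm _).trans ?_
    simpa [Prod.norm_def] using hM p hp
  have e2 : |fderivWithin ℝ u (closure Ω) p (0, 1)| ≤ M := by
    refine ((fderivWithin ℝ u (closure Ω) p).le_opNorm _).trans ?_
    simpa [Prod.norm_def] using hM p hp
  have s1 := sq_le_sq' (abs_le.1 e1).1 (abs_le.1 e1).2
  have s2 := sq_le_sq' (abs_le.1 e2).1 (abs_le.1 e2).2
  have s3 := sq_le_sq' (abs_le.1 hup).1 (abs_le.1 hup).2
  unfold auxG
  gcongr

theorem aux_slice {Ω : Set (ℝ × ℝ)} (ho : IsOpen Ω) {u : ℝ × ℝ → ℝ}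
    (hu : ContDiffOn ℝ 1 u (closure Ω)) {θ : ℝ} (hθ : ∀ σ ∈ Set.Ioo (0 : ℝ) 3, (σ, θ) ∈ Ω)
    (hint : IntegrableOn (fun σ => auxG Ω u (σ, θ)) (Set.Ioo 0 3)) :
    u (0, θ) ^ 2 ≤ 2 * ∫ σ in Set.Ioo (0 : ℝ) 3, auxG Ω u (σ, θ) := by
  have hcl : ∀ σ ∈ Set.Icc (0 : ℝ) 3, (σ, θ) ∈ closure Ω := by
    intro σ hσ
    rw [← closure_Ioo (by norm_num)] at hσ
    have hc : Continuous (fun σ : ℝ => (σ, θ)) := by fun_prop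
    exact map_mem_closure (f := fun σ : ℝ => (σ, θ)) hc hσ hθ
  have hcont : ContinuousOn (fun σ : ℝ => u (σ, θ) ^ 2 * (σ / 3 - 1)) (Set.Icc 0 3) := by
    have h1 : ContinuousOn (fun σ : ℝ => u (σ, θ)) (Set.Icc 0 3) :=
      hu.continuousOn.comp (f := fun σ : ℝ => (σ, θ)) (by fun_prop) hcl
    exact (h1.pow 2).mul (by fun_prop)
  have hder : ∀ σ ∈ Set.Ioo (0 : ℝ) 3, HasDerivAt (fun σ : ℝ => u (σ, θ) ^ 2 * (σ / 3 - 1))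
      (2 * u (σ, θ) * fderivWithin ℝ u (closure Ω) (σ, θ) (1, 0) * (σ / 3 - 1)
        + u (σ, θ) ^ 2 * (1 / 3)) σ := by
    intro σ hσ
    have h1 : HasDerivAt (fun σ : ℝ => (σ, θ)) ((1 : ℝ), (0 : ℝ)) σ :=
      (hasDerivAt_id σ).prodMk (hasDerivAt_const σ θ)
    have h2 : HasDerivAt (fun σ : ℝ => u (σ, θ))
        (fderivWithin ℝ u (closure Ω) (σ, θ) (1, 0)) σ :=
      HasFDerivAt.comp_hasDerivAt σ (aux_hasFDerivAt ho hu (hθ σ hσ)) h1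
    have h3 : HasDerivAt (fun σ : ℝ => σ / 3 - 1) (1 / 3) σ :=
      ((hasDerivAt_id σ).div_const 3).sub_const 1
    refine HasDerivAt.congr_deriv (HasDerivAt.mul (h2.pow 2) h3) ?_
    norm_num
  have h := intervalIntegral.sub_le_integral_of_hasDeriv_right_of_le (a := (0 : ℝ)) (b := 3)
    (φ := fun σ => 2 * auxG Ω u (σ, θ)) (by norm_num) hcont
    (fun σ hσ => (hder σ hσ).hasDerivWithinAt)
    ((integrableOn_Icc_iff_integrableOn_Ioo).2 (hint.const_mul 2)) ?_
  · rw [intervalIntegral.integral_of_le (by norm_num), integral_Ioc_eq_integral_Ioo,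
      integral_const_mul] at h
    norm_num at h
    linarith
  · intro σ hσ
    unfold auxG
    set D := fderivWithin ℝ u (closure Ω) (σ, θ) (1, 0)
    set E := fderivWithin ℝ u (closure Ω) (σ, θ) (0, 1)
    set w := u (σ, θ)
    have hD : |D| ≤ Real.sqrt (D ^ 2 + E ^ 2) := by
      apply Real.abs_le_sqrt; nlinarith [sq_nonneg E]
    have h1 : |w * D * (σ / 3 - 1)| ≤ |w| * Real.sqrt (D ^ 2 + E ^ 2) := by
      rw [abs_mul, abs_mul]
      have : |σ / 3 - 1| ≤ 1 := by
        rw [abs_le]; constructor <;> linarith [hσ.1, hσ.2]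
      calc |w| * |D| * |σ / 3 - 1| ≤ |w| * |D| * 1 := by gcongr
        _ ≤ _ := by rw [mul_one]; gcongr
    have h2 := le_abs_self (w * D * (σ / 3 - 1))
    nlinarith [sq_nonneg w]

theorem aux_main {Ω : Set (ℝ × ℝ)} (ho : IsOpen Ω) (hb : Bornology.IsBounded Ω)
    {u : ℝ × ℝ → ℝ} (hu : ContDiffOn ℝ 1 u (closure Ω)) {a b : ℝ} (hab : a < b)
    (hsub : Set.Ioo (0 : ℝ) 3 ×ˢ Set.Ioo a b ⊆ Ω) {F : Set ℝ} (hF : F ⊆ Set.Icc a b) :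
    ∫ θ in F, u (0, θ) ^ 2 ≤ 2 * ∫ p in Ω, auxG Ω u p := by
  have hG := aux_integrable ho hb hu
  have hcl : ∀ θ ∈ Set.Icc a b, ((0 : ℝ), θ) ∈ closure Ω := by
    intro θ hθ
    apply closure_mono hsub
    rw [closure_prod_eq, closure_Ioo (by norm_num), closure_Ioo hab.ne]
    exact ⟨by simp, hθ⟩
  have hc : ContinuousOn (fun θ : ℝ => u (0, θ) ^ 2) (Set.Icc a b) :=
    (hu.continuousOn.comp (f := fun θ : ℝ => ((0 : ℝ), θ)) (by fun_prop) hcl).pow 2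
  have hci : IntegrableOn (fun θ : ℝ => u (0, θ) ^ 2) (Set.Icc a b) :=
    hc.integrableOn_compact isCompact_Icc
  have hP : Integrable (auxG Ω u)
      ((volume.restrict (Set.Ioo (0 : ℝ) 3)).prod (volume.restrict (Set.Ioo a b))) := by
    rw [Measure.prod_restrict]
    exact hG.mono_set hsub
  calc ∫ θ in F, u (0, θ) ^ 2 ≤ ∫ θ in Set.Icc a b, u (0, θ) ^ 2 :=
        setIntegral_mono_set hci (Filter.Eventually.of_forall fun θ => sq_nonneg _)
          hF.eventuallyLE
    _ = ∫ θ in Set.Ioo a b, u (0, θ) ^ 2 := integral_Icc_eq_integral_Ioo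
    _ ≤ ∫ θ in Set.Ioo a b, 2 * ∫ σ in Set.Ioo (0 : ℝ) 3, auxG Ω u (σ, θ) := by
        refine setIntegral_mono_ae_restrict (hci.mono_set Set.Ioo_subset_Icc_self)
          (hP.integral_prod_right.const_mul 2) ?_
        filter_upwards [hP.prod_left_ae, ae_restrict_mem measurableSet_Ioo] with θ h1 h2
        exact aux_slice ho hu (fun σ hσ => hsub ⟨hσ, h2⟩) h1
    _ = 2 * ∫ p in Set.Ioo (0 : ℝ) 3 ×ˢ Set.Ioo a b, auxG Ω u p := by
        rw [integral_const_mul, ← integral_prod_symm _ hP, Measure.prod_restrict]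
        rfl
    _ ≤ 2 * ∫ p in Ω, auxG Ω u p := by
        refine mul_le_mul_of_nonneg_left ?_ (by norm_num)
        exact setIntegral_mono_set hG
          (Filter.Eventually.of_forall fun p => auxG_nonneg Ω u p) hsub.eventuallyLE

theorem aux_isOpen_compl (c r : ℝ) :
    IsClosed {p : ℝ × ℝ | p.1 ^ 2 + (p.2 - c) ^ 2 ≤ r ^ 2} :=
  isClosed_le (by fun_prop) (by fun_prop)

theorem aux_isOpen_compl2 (c r : ℝ) :
    IsClosed {p : ℝ × ℝ | p.1 ^ 2 + (p.2 + c) ^ 2 ≤ r ^ 2} :=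
  isClosed_le (by fun_prop) (by fun_prop)

theorem aux_closure1 {r θ : ℝ} (h : ((0 : ℝ), θ) ∈ closure (OmegaR r)) :
    r ^ 2 ≤ (θ - Real.pi / 2) ^ 2 := by
  have hc : IsClosed {p : ℝ × ℝ | r ^ 2 ≤ p.1 ^ 2 + (p.2 - Real.pi / 2) ^ 2} :=
    isClosed_le (by fun_prop) (by fun_prop)
  have hs : OmegaR r ⊆ {p : ℝ × ℝ | r ^ 2 ≤ p.1 ^ 2 + (p.2 - Real.pi / 2) ^ 2} := by
    intro p hp
    have h2 : ¬ (p.1 ^ 2 + (p.2 - Real.pi / 2) ^ 2 ≤ r ^ 2) := hp.2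
    rw [Set.mem_ofPred_eq]
    exact (not_le.1 h2).le
  simpa using closure_minimal hs hc h

theorem aux_closure2 {r θ : ℝ} (h : ((0 : ℝ), θ) ∈ closure (OmegaRR r)) :
    r ^ 2 ≤ (θ + Real.pi / 2) ^ 2 := by
  have hc : IsClosed {p : ℝ × ℝ | r ^ 2 ≤ p.1 ^ 2 + (p.2 + Real.pi / 2) ^ 2} :=
    isClosed_le (by fun_prop) (by fun_prop)
  have hs : OmegaRR r ⊆ {p : ℝ × ℝ | r ^ 2 ≤ p.1 ^ 2 + (p.2 + Real.pi / 2) ^ 2} := by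
    intro p hp
    have h2 : ¬ (p.1 ^ 2 + (p.2 + Real.pi / 2) ^ 2 ≤ r ^ 2) := hp.2
    rw [Set.mem_ofPred_eq]
    exact (not_le.1 h2).le
  simpa using closure_minimal hs hc h

/-- **Partial trace inequality on the perforated rectangles** (Lemma C.4 of the paper):
there is a constant `C > 0`, independent of `r`, such that for every `0 < r < π/2`, each
`Ω ∈ {Ω_r, Ω_{r,r}}`, and every `C¹` function `u` on the closure of `Ω`, the integral of
`u(0,θ)²` over those `θ ∈ (-π/2, π/2)` with `(0,θ) ∈ ∂Ω` is bounded by `C` times the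
integral over `Ω` of `|u|·|∇u| + u²`, with `|∇u|` the Euclidean gradient norm. -/
theorem trace_inequality_perforated_rectangles :
    ∃ C : ℝ, 0 < C ∧ ∀ r : ℝ, 0 < r → r < Real.pi / 2 → ∀ Ω : Set (ℝ × ℝ),
      (Ω = OmegaR r ∨ Ω = OmegaRR r) → ∀ u : ℝ × ℝ → ℝ,
      ContDiffOn ℝ 1 u (closure Ω) →
      (∫ θ in {θ : ℝ | θ ∈ Set.Ioo (-(Real.pi / 2)) (Real.pi / 2) ∧
            ((0 : ℝ), θ) ∈ frontier Ω},
          (u (0, θ)) ^ 2) ≤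
        C * ∫ p in Ω,
            (|u p| *
                Real.sqrt ((fderivWithin ℝ u (closure Ω) p (1, 0)) ^ 2 +
                  (fderivWithin ℝ u (closure Ω) p (0, 1)) ^ 2) +
              (u p) ^ 2) := by
  refine ⟨2, by norm_num, ?_⟩
  intro r hr hr2 Ω hΩ u hu
  have hoR : IsOpen Rrect := isOpen_Ioo.prod isOpen_Ioo
  have hbR : Bornology.IsBounded Rrect := (Metric.isBounded_Ioo _ _).prod (Metric.isBounded_Ioo _ _)
  have ho1 : IsOpen (OmegaR r) := hoR.sdiff (aux_isOpen_compl _ _)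
  have ho2 : IsOpen (OmegaRR r) := ho1.sdiff (aux_isOpen_compl2 _ _)
  have hb1 : Bornology.IsBounded (OmegaR r) := hbR.subset Set.sdiff_subset
  have hb2 : Bornology.IsBounded (OmegaRR r) := hb1.subset Set.sdiff_subset
  rcases hΩ with rfl | rfl
  · refine aux_main ho1 hb1 hu (a := -(Real.pi / 2)) (b := Real.pi / 2 - r) (by linarith) ?_ ?_
    · rintro ⟨σ, θ⟩ ⟨⟨h1, h2⟩, h3, h4⟩
      refine ⟨⟨⟨h1, h2⟩, h3, by simp only at *; linarith⟩, ?_⟩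
      simp only [Set.mem_ofPred_eq, not_le] at *
      nlinarith
    · rintro θ ⟨⟨h1, h2⟩, h3⟩
      have h4 := aux_closure1 (frontier_subset_closure h3)
      exact ⟨h1.le, by nlinarith⟩
  · refine aux_main ho2 hb2 hu (a := -(Real.pi / 2) + r) (b := Real.pi / 2 - r) (by linarith) ?_ ?_
    · rintro ⟨σ, θ⟩ ⟨⟨h1, h2⟩, h3, h4⟩
      simp only at h1 h2 h3 h4
      refine ⟨⟨⟨⟨h1, h2⟩, by simp only; linarith, by simp only; linarith⟩, ?_⟩, ?_⟩
      · simp only [Set.mem_ofPred_eq, not_le]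
        nlinarith
      · simp only [Set.mem_ofPred_eq, not_le]
        nlinarith
    · rintro θ ⟨⟨h1, h2⟩, h3⟩
      have h4 := aux_closure1 (closure_mono Set.sdiff_subset (frontier_subset_closure h3))
      have h5 := aux_closure2 (frontier_subset_closure h3)
      exact ⟨by nlinarith, by nlinarith⟩
end

section
/- There exists T_0 > 0 such that for every T > T_0 the equation tanh(γT) = γ·coth(T) has exactly one solution γ = γ(T) in (0, ∞); this solution satisfies 0 < γ(T) < 1; and γ(T) → 1 as T → ∞. -/
lemma aux_sinh {u v : ℝ} (hu : 0 < u) (huv : u < v) : v * Real.sinh u < u * Real.sinh v := by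
  have hc : StrictConvexOn ℝ (Set.Ici (0:ℝ)) Real.sinh := by
    apply StrictMonoOn.strictConvexOn_of_deriv (convex_Ici 0) Real.continuous_sinh.continuousOn
    rw [Real.deriv_sinh, interior_Ici]
    exact Real.cosh_strictMonoOn.mono Set.Ioi_subset_Ici_self
  have h := hc.secant_strict_mono (a := 0) (x := u) (y := v) (by simp) (by simpa using hu.le)
    (by simpa using (hu.trans huv).le) hu.ne' (hu.trans huv).ne' huv
  simp only [Real.sinh_zero, sub_zero] at h
  rw [div_lt_div_iff₀ hu (hu.trans huv)] at h
  linarith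

lemma aux_tanh {a b : ℝ} (ha : 0 < a) (hab : a < b) : a * Real.tanh b < b * Real.tanh a := by
  have h := aux_sinh (u := b - a) (v := a + b) (by linarith) (by linarith)
  rw [Real.sinh_sub, Real.sinh_add] at h
  have h1 := Real.cosh_pos a
  have h2 := Real.cosh_pos b
  rw [Real.tanh_eq_sinh_div_cosh, Real.tanh_eq_sinh_div_cosh, mul_div_assoc', mul_div_assoc',
    div_lt_div_iff₀ h2 h1]
  nlinarith

lemma aux_unique {T k a b : ℝ} (hT : 0 < T) (ha : 0 < a) (hab : a < b)
    (h1 : Real.tanh (a * T) = a * k) (h2 : Real.tanh (b * T) = b * k) : False := by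
  have h := aux_tanh (a := a * T) (b := b * T) (by positivity) (by gcongr)
  rw [h1, h2] at h
  nlinarith

lemma aux_coth {T : ℝ} (hT : 0 < T) : Real.tanh T * (Real.cosh T / Real.sinh T) = 1 := by
  have h1 := Real.cosh_pos T
  have h2 := Real.sinh_pos_iff.2 hT
  rw [Real.tanh_eq_sinh_div_cosh]
  field_simp

lemma aux_tanh_pos {T : ℝ} (hT : 0 < T) : 0 < Real.tanh T := by
  rw [Real.tanh_eq_sinh_div_cosh]
  exact div_pos (Real.sinh_pos_iff.2 hT) (Real.cosh_pos T)

lemma aux_coth_gt {T : ℝ} (hT : 0 < T) : 1 < Real.cosh T / Real.sinh T := by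
  rw [one_lt_div (Real.sinh_pos_iff.2 hT)]
  exact Real.sinh_lt_cosh T

lemma aux_exists {T c : ℝ} (hT : 0 < T) (hc1 : c < 1)
    (h : c < Real.tanh T * Real.tanh (c * T)) :
    ∃ γ, c < γ ∧ γ < 1 ∧ Real.tanh (γ * T) = γ * (Real.cosh T / Real.sinh T) := by
  have hk := aux_coth_gt hT
  have hp := aux_coth hT
  set k := Real.cosh T / Real.sinh T
  have hcont : ContinuousOn (fun γ : ℝ => γ * k - Real.tanh (γ * T)) (Set.Icc c 1) := by
    have : Continuous (fun γ : ℝ => γ * k - Real.tanh (γ * T)) := by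
      simp only [Real.tanh_eq_sinh_div_cosh]
      refine (by fun_prop : Continuous fun γ : ℝ => γ * k).sub (Continuous.div ?_ ?_ ?_)
      · exact Real.continuous_sinh.comp (by fun_prop)
      · exact Real.continuous_cosh.comp (by fun_prop)
      · exact fun x => (Real.cosh_pos _).ne'
    exact this.continuousOn
  have h0 : (0:ℝ) ∈ Set.Ioo (c * k - Real.tanh (c * T)) (1 * k - Real.tanh (1 * T)) := by
    constructor
    · have : c * k < (Real.tanh T * Real.tanh (c * T)) * k := by gcongr
      have h2 : (Real.tanh T * Real.tanh (c * T)) * k = Real.tanh (c * T) := by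
        linear_combination Real.tanh (c * T) * hp
      linarith
    · have := Real.tanh_lt_one (1 * T)
      linarith
  obtain ⟨γ, hγ, he⟩ := intermediate_value_Ioo hc1.le hcont h0
  exact ⟨γ, hγ.1, hγ.2, by simp only at he; linarith⟩

lemma aux_lim : Filter.Tendsto Real.tanh Filter.atTop (nhds 1) := by
  have h : ∀ x : ℝ, Real.tanh x = 1 - 2 / (Real.exp (2 * x) + 1) := by
    intro x
    have e : Real.exp (2 * x) = Real.exp x * Real.exp x := by rw [← Real.exp_add]; ring_nf
    have := Real.exp_pos x
    rw [Real.tanh_eq, e, Real.exp_neg]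
    field_simp
    ring
  have h2 : Filter.Tendsto (fun x : ℝ => Real.exp (2 * x) + 1) Filter.atTop Filter.atTop :=
    Filter.tendsto_atTop_add_const_right _ _ (Real.tendsto_exp_atTop.comp
      (Filter.tendsto_id.const_mul_atTop (by norm_num)))
  have h3 := (tendsto_const_nhds (x := (1:ℝ))).sub (h2.const_div_atTop 2)
  rw [sub_zero] at h3
  exact h3.congr fun x => (h x).symm

lemma aux_ev {c : ℝ} (hc : 0 < c) (hc1 : c < 1) :
    ∀ᶠ T in Filter.atTop, c < Real.tanh T * Real.tanh (c * T) := by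
  have h := aux_lim.mul (aux_lim.comp (Filter.tendsto_id.const_mul_atTop hc))
  rw [one_mul] at h
  exact h.eventually (lt_mem_nhds hc1)

/-- There exists `T₀ > 0` such that for every `T > T₀` the equation
`tanh(γT) = γ·coth(T)` has exactly one solution `γ = γ(T)` in `(0,∞)`, this solution
satisfies `0 < γ(T) < 1`, and `γ(T) → 1` as `T → ∞`.  (Here `coth T = cosh T / sinh T`.) -/
theorem dirichlet_eigenvalue_equation_unique_root :
    ∃ T₀ : ℝ, 0 < T₀ ∧ ∃ g : ℝ → ℝ,
      (∀ T : ℝ, T₀ < T →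
        (0 < g T ∧ g T < 1 ∧
          Real.tanh (g T * T) = g T * (Real.cosh T / Real.sinh T)) ∧
        ∀ γ : ℝ, 0 < γ →
          Real.tanh (γ * T) = γ * (Real.cosh T / Real.sinh T) → γ = g T) ∧
      Filter.Tendsto g Filter.atTop (nhds 1) := by
  obtain ⟨A, hA⟩ := Filter.eventually_atTop.1 (aux_ev (c := 1/2) (by norm_num) (by norm_num))
  have hex : ∀ T : ℝ, ∃ γ : ℝ, max A 1 < T → (0 < γ ∧ γ < 1 ∧
      Real.tanh (γ * T) = γ * (Real.cosh T / Real.sinh T)) := by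
    intro T
    by_cases hT : max A 1 < T
    · obtain ⟨h1, h2⟩ := max_lt_iff.1 hT
      obtain ⟨γ, a, b, c⟩ := aux_exists (by linarith) (by norm_num) (hA T h1.le)
      exact ⟨γ, fun _ => ⟨by linarith, b, c⟩⟩
    · exact ⟨0, fun h => absurd h hT⟩
  choose g hg using hex
  have hu : ∀ T : ℝ, max A 1 < T → ∀ γ : ℝ, 0 < γ →
      Real.tanh (γ * T) = γ * (Real.cosh T / Real.sinh T) → γ = g T := by
    intro T hT γ hγ he
    have h1 : 0 < T := by linarith [(max_lt_iff.1 hT).2]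
    obtain ⟨a, b, c⟩ := hg T hT
    rcases lt_trichotomy γ (g T) with h | h | h
    · exact (aux_unique h1 hγ h he c).elim
    · exact h
    · exact (aux_unique h1 a h c he).elim
  refine ⟨max A 1, by positivity, g, fun T hT => ⟨hg T hT, hu T hT⟩, ?_⟩
  rw [tendsto_order]
  constructor
  · intro a ha
    have hc1 : max a (1/2) < 1 := max_lt ha (by norm_num)
    have hc0 : 0 < max a (1/2) := lt_of_lt_of_le (by norm_num) (le_max_right _ _)
    filter_upwards [aux_ev hc0 hc1, Filter.eventually_gt_atTop (max A 1)] with T h1 h2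
    obtain ⟨γ, x, y, z⟩ := aux_exists (by linarith [(max_lt_iff.1 h2).2]) hc1 h1
    rw [← hu T h2 γ (hc0.trans x) z]
    exact (le_max_left _ _).trans_lt x
  · intro a ha
    filter_upwards [Filter.eventually_gt_atTop (max A 1)] with T h2
    exact (hg T h2).2.1.trans ha
end

section
/- There exists T_0 > 0 such that for every T > T_0 and every γ > 0, the equality γ² − γ·tanh(γT)·tanh(T) − sech²(T) = 0 holds if and only if γ = 1. In particular, for every T > 0 one has the identity 1 − tanh²(T) − sech²(T) = 0. -/
theorem aux_sc (s x : ℝ) (hs : 0 < s) (hs1 : s ≤ 1) (hx : 0 ≤ x) :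
    s * Real.tanh x ≤ Real.tanh (s * x) := by
  have hd : ∀ y : ℝ, HasDerivAt
      (fun y => Real.sinh (s * y) * Real.cosh y - s * (Real.sinh y * Real.cosh (s * y)))
      ((1 - s ^ 2) * (Real.sinh y * Real.sinh (s * y))) y := by
    intro y
    have h0 : HasDerivAt (fun y : ℝ => s * y) s y := by
      simpa using (hasDerivAt_id y).const_mul s
    have h := (h0.sinh.mul (Real.hasDerivAt_cosh y)).sub
      (((Real.hasDerivAt_sinh y).mul h0.cosh).const_mul s)
    refine HasDerivAt.congr_deriv (f' := _) h ?_
    ring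
  have hm : MonotoneOn
      (fun y => Real.sinh (s * y) * Real.cosh y - s * (Real.sinh y * Real.cosh (s * y)))
      (Set.Ici 0) := by
    apply monotoneOn_of_deriv_nonneg (convex_Ici 0)
    · exact fun y _ => (hd y).continuousAt.continuousWithinAt
    · exact fun y _ => (hd y).differentiableAt.differentiableWithinAt
    · intro y hy
      rw [interior_Ici] at hy
      have hy' : (0 : ℝ) < y := hy
      rw [(hd y).deriv]
      have h1 : 0 ≤ Real.sinh y := Real.sinh_nonneg_iff.2 hy'.le
      have h2 : 0 ≤ Real.sinh (s * y) := Real.sinh_nonneg_iff.2 (by positivity)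
      have h3 : 0 ≤ 1 - s ^ 2 := by nlinarith
      positivity
  have h := hm (Set.mem_Ici.2 le_rfl) (Set.mem_Ici.2 hx) hx
  simp only [mul_zero, Real.sinh_zero, zero_mul, sub_zero] at h
  rw [Real.tanh_eq_sinh_div_cosh, Real.tanh_eq_sinh_div_cosh, ← mul_div_assoc,
    div_le_div_iff₀ (Real.cosh_pos _) (Real.cosh_pos _)]
  linarith

theorem aux_id (T : ℝ) : 1 - (Real.tanh T) ^ 2 - ((Real.cosh T)⁻¹) ^ 2 = 0 := by
  have := (Real.cosh_pos T).ne'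
  rw [Real.tanh_eq_sinh_div_cosh]
  field_simp
  linarith [Real.cosh_sq T]


/-- There exists `T₀ > 0` such that for every `T > T₀` and every `γ > 0` the equality
`γ² - γ·tanh(γT)·tanh(T) - sech²(T) = 0` holds if and only if `γ = 1`; in particular, for
every `T > 0` one has the identity `1 - tanh²(T) - sech²(T) = 0`. -/
theorem neumann_odd_eigenvalue_equation :
    (∃ T₀ : ℝ, 0 < T₀ ∧ ∀ T : ℝ, T₀ < T → ∀ γ : ℝ, 0 < γ →
      (γ ^ 2 - γ * Real.tanh (γ * T) * Real.tanh T - ((Real.cosh T)⁻¹) ^ 2 = 0 ↔ γ = 1)) ∧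
    ∀ T : ℝ, 0 < T → 1 - (Real.tanh T) ^ 2 - ((Real.cosh T)⁻¹) ^ 2 = 0 := by
  refine ⟨⟨1, one_pos, ?_⟩, fun T _ => aux_id T⟩
  intro T hT γ hγ
  have hT0 : 0 < T := by linarith
  have hid := aux_id T
  have ht : 0 < Real.tanh T := by
    rw [Real.tanh_eq_sinh_div_cosh]
    exact div_pos (Real.sinh_pos_iff.2 hT0) (Real.cosh_pos T)
  have hc : 0 < ((Real.cosh T)⁻¹) ^ 2 := by
    have := Real.cosh_pos T
    positivity
  constructor
  · intro h
    rcases lt_trichotomy γ 1 with h1 | h1 | h1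
    · exfalso
      have h2 := aux_sc γ T hγ h1.le hT0.le
      have h3 := mul_le_mul_of_nonneg_left h2 (mul_pos hγ ht).le
      have h4 : 0 < ((Real.cosh T)⁻¹) ^ 2 * (1 - γ ^ 2) := mul_pos hc (by nlinarith)
      have h5 : Real.tanh T ^ 2 = 1 - ((Real.cosh T)⁻¹) ^ 2 := by linarith
      have h6 : γ * Real.tanh T * (γ * Real.tanh T)
          = γ ^ 2 * (1 - ((Real.cosh T)⁻¹) ^ 2) := by rw [← h5]; ring
      linarith
    · exact h1
    · exfalso
      have h2 := aux_sc γ⁻¹ (γ * T) (by positivity) (inv_le_one_of_one_le₀ h1.le) (by positivity)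
      rw [inv_mul_cancel_left₀ hγ.ne', inv_mul_le_iff₀ hγ] at h2
      have h3 := mul_le_mul_of_nonneg_left h2 (mul_pos hγ ht).le
      have h4 : 0 < ((Real.cosh T)⁻¹) ^ 2 * (γ ^ 2 - 1) := mul_pos hc (by nlinarith)
      have h5 : Real.tanh T ^ 2 = 1 - ((Real.cosh T)⁻¹) ^ 2 := by linarith
      have h6 : γ * Real.tanh T * (γ * Real.tanh T)
          = γ ^ 2 * (1 - ((Real.cosh T)⁻¹) ^ 2) := by rw [← h5]; ring
      linarith
  · rintro rfl
    rw [one_mul, one_mul]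
    linarith
end
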